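/- arXiv:2211.14374 — 2 statements merged into one kernel-verified Lean document; each statement's English description precedes it below -/
import Mathlib

section
/- Let M and N be log-convex weight sequences. Then the following are equivalent: (i) there exists A ≥ 1 such that N_j ≤ A·M_j for all j ∈ ℕ; (ii) v_M ≼ v_N, i.e. there exists C ≥ 1 with v_N(t) ≤ C·v_M(t) for all t ≥ 0; (iii) H^∞_{v_M}(ℂ) ⊆ H^∞_{v_N}(ℂ). Consequently, H^∞_{v_M}(ℂ) = H^∞_{v_N}(ℂ) if and only if there exists C ≥ 1 with C^{−1}·N_j ≤ M_j ≤ C·N_j for all j ∈ ℕ. -/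
open Filter Set

/-- The associated weight function `ω_M(t) = sup_j log(t^j / M_j)` for `t ≠ 0`, `ω_M(0) = 0`. -/
noncomputable def omegaM (M : ℕ → ℝ) (t : ℝ) : ℝ :=
  if t = 0 then 0 else ⨆ j : ℕ, Real.log (t ^ j / M j)

/-- `v_M(t) = exp(-ω_M(t))`. -/
noncomputable def vM (M : ℕ → ℝ) (t : ℝ) : ℝ :=
  Real.exp (-(omegaM M t))

/-- `v_{M,c}(t) = exp(-ω_M(c·t))`. -/
noncomputable def vMc (M : ℕ → ℝ) (c t : ℝ) : ℝ :=
  Real.exp (-(omegaM M (c * t)))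

/-- `v_M^c(t) = exp(-c·ω_M(t))`. -/
noncomputable def vMpow (M : ℕ → ℝ) (c t : ℝ) : ℝ :=
  Real.exp (-(c * omegaM M t))

/-- A weight sequence: positive, `M_0 = 1`, `(M_j)^{1/j} → ∞`. -/
def WeightSeq (M : ℕ → ℝ) : Prop :=
  (∀ j, 0 < M j) ∧ M 0 = 1 ∧
    Tendsto (fun j : ℕ => (M j) ^ (1 / (j : ℝ))) atTop atTop

/-- Log-convexity: `M_j² ≤ M_{j-1}·M_{j+1}` for `j ≥ 1`. -/
def LogConvexSeq (M : ℕ → ℝ) : Prop :=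
  ∀ j : ℕ, 1 ≤ j → (M j) ^ 2 ≤ M (j - 1) * M (j + 1)

/-- The class `LC`: normalized log-convex weight sequences. -/
def LCset (M : ℕ → ℝ) : Prop :=
  WeightSeq M ∧ LogConvexSeq M ∧ 1 ≤ M 1

/-- Weighted space of entire functions with `sup |f(z)|·v(|z|) < ∞`. -/
def Hinf (v : ℝ → ℝ) : Set (ℂ → ℂ) :=
  {f | Differentiable ℂ f ∧
    ∃ C : ℝ, ∀ z : ℂ, ‖f z‖ * v ‖z‖ ≤ C}

/-- The weighted sup-norm `‖f‖_v`. -/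
noncomputable def wnorm (v : ℝ → ℝ) (f : ℂ → ℂ) : ℝ :=
  ⨆ z : ℂ, ‖f z‖ * v ‖z‖

/-- A weight: strictly positive, continuous, non-increasing and rapidly
decreasing on `[0,∞)`. -/
def IsWeight (v : ℝ → ℝ) : Prop :=
  (∀ t : ℝ, 0 ≤ t → 0 < v t) ∧ ContinuousOn v (Set.Ici 0) ∧
    AntitoneOn v (Set.Ici 0) ∧
    ∀ k : ℕ, Tendsto (fun t : ℝ => t ^ k * v t) atTop (nhds 0)

/-- A normalized weight: `v ≡ 1` on `[0,1]`. -/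
def NormalizedWeight (v : ℝ → ℝ) : Prop :=
  ∀ t : ℝ, 0 ≤ t → t ≤ 1 → v t = 1

/-- A (log-)convex weight: `t ↦ -log v(eᵗ)` is convex on `ℝ`. -/
def ConvexWeight (v : ℝ → ℝ) : Prop :=
  ConvexOn ℝ Set.univ fun t : ℝ => -Real.log (v (Real.exp t))

/-- Moderate growth for a weight: `v(H·t) ≤ e^H · v(t)²`. -/
def ModerateGrowthW (v : ℝ → ℝ) : Prop :=
  ∃ H : ℝ, 1 ≤ H ∧ ∀ t : ℝ, 0 ≤ t → v (H * t) ≤ Real.exp H * (v t) ^ 2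

/-- Moderate growth (mg) for a sequence: `M_{j+k} ≤ C^{j+k}·M_j·M_k`. -/
def MGseq (M : ℕ → ℝ) : Prop :=
  ∃ C : ℝ, 1 ≤ C ∧ ∀ j k : ℕ, M (j + k) ≤ C ^ (j + k) * M j * M k

/-- The associated weight sequence `M^v_j = sup_{t>0} t^j·v(t)`. -/
noncomputable def assocSeq (v : ℝ → ℝ) (j : ℕ) : ℝ :=
  ⨆ t : Set.Ioi (0 : ℝ), (t : ℝ) ^ j * v t

/-- The unit ball `B_{1/v}(ℂ)` of entire functions bounded by `1/v`. -/
def BClass (v : ℝ → ℝ) : Set (ℂ → ℂ) :=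
  {f | Differentiable ℂ f ∧ ∀ z : ℂ, ‖f z‖ ≤ 1 / v ‖z‖}

/-- The associated growth condition `w̃_v(z) = sup{|f(z)| : f ∈ B_{1/v}}`. -/
noncomputable def wTilde (v : ℝ → ℝ) (z : ℂ) : ℝ :=
  sSup {x : ℝ | ∃ f ∈ BClass v, x = ‖f z‖}

/-- The associated weight `ṽ = 1/w̃_v`, as a function of `t = |z|`. -/
noncomputable def vTilde (v : ℝ → ℝ) (t : ℝ) : ℝ :=
  1 / wTilde v (t : ℂ)

/-- An essential weight: `v ∼ ṽ`. -/
def Essential (v : ℝ → ℝ) : Prop :=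
  ∃ C : ℝ, 1 ≤ C ∧ ∀ t : ℝ, 0 ≤ t →
    v t ≤ C * vTilde v t ∧ vTilde v t ≤ C * v t

/-- `P_v(t) = sup_j t^j/‖z^j‖_v`. -/
noncomputable def Pfun (v : ℝ → ℝ) (t : ℝ) : ℝ :=
  ⨆ j : ℕ, t ^ j / wnorm v fun z : ℂ => z ^ j

/-- The convolved sequence `(M⋆N)_j = min_{0≤k≤j} M_k·N_{j-k}`. -/
noncomputable def convSeq (M N : ℕ → ℝ) (j : ℕ) : ℝ :=
  (Finset.range (j + 1)).inf' Finset.nonempty_range_add_one fun k => M k * N (j - k)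

lemma aux_bdd (M : ℕ → ℝ) (hM : WeightSeq M) (t : ℝ) (ht : 0 < t) :
    BddAbove (Set.range fun j : ℕ => Real.log (t ^ j / M j)) := by
  obtain ⟨hpos, h0, hlim⟩ := hM
  have h1 : ∀ᶠ j : ℕ in atTop, Real.log (t ^ j / M j) ≤ 0 := by
    filter_upwards [hlim.eventually_ge_atTop t, eventually_ge_atTop 1] with j hj hj1
    have hj0 : j ≠ 0 := by omega
    have h2 : t ^ j ≤ M j := by
      calc t ^ j ≤ ((M j) ^ (1 / (j : ℝ))) ^ j := pow_le_pow_left₀ ht.le hj j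
        _ = M j := by
          rw [one_div]
          exact Real.rpow_inv_natCast_pow (hpos j).le hj0
    apply Real.log_nonpos
    · exact div_nonneg (pow_nonneg ht.le j) (hpos j).le
    · rw [div_le_one (hpos j)]
      exact h2
  exact (Filter.isBoundedUnder_of_eventually_le h1).bddAbove_range

lemma aux_upper (M : ℕ → ℝ) (hM : WeightSeq M) (t : ℝ) (ht : 0 ≤ t) (j : ℕ) :
    t ^ j * vM M t ≤ M j := by
  have hp := hM.1 j
  rcases ht.eq_or_lt with h | h
  · subst h
    rcases Nat.eq_zero_or_pos j with hj | hj
    · subst hj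
      simp [vM, omegaM, hM.2.1]
    · rw [zero_pow (by omega)]
      simpa using hp.le
  · have h1 : Real.log (t ^ j / M j) ≤ omegaM M t := by
      rw [omegaM, if_neg h.ne']
      exact le_ciSup (aux_bdd M hM t h) j
    have h2 : t ^ j / M j ≤ Real.exp (omegaM M t) :=
      (Real.log_le_iff_le_exp (by positivity)).1 h1
    rw [vM, Real.exp_neg, ← div_eq_mul_inv, div_le_iff₀ (Real.exp_pos _)]
    rw [div_le_iff₀ hp] at h2
    linarith

lemma aux_exists (M : ℕ → ℝ) (hM : WeightSeq M) (hlc : LogConvexSeq M) (j : ℕ) :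
    ∃ t : ℝ, 0 < t ∧ M j ≤ t ^ j * vM M t := by
  have hp := hM.1
  have hmono : Monotone fun k => M (k + 1) / M k := by
    apply monotone_nat_of_le_succ
    intro k
    have := hlc (k + 1) (by omega)
    simp only [Nat.add_sub_cancel] at this
    rw [div_le_div_iff₀ (hp _) (hp _)]
    nlinarith
  set t := M (j + 1) / M j with htdef
  have ht : 0 < t := div_pos (hp _) (hp _)
  have hup : ∀ k, j ≤ k → t ^ k / M k ≤ t ^ j / M j := by
    intro k hk
    induction k, hk using Nat.le_induction with
    | base => exact le_rfl
    | succ k hk ih =>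
      refine le_trans ?_ ih
      have h1 : t ≤ M (k + 1) / M k := hmono hk
      rw [le_div_iff₀ (hp k)] at h1
      rw [div_le_div_iff₀ (hp _) (hp _), pow_succ]
      have := mul_le_mul_of_nonneg_left h1 (pow_pos ht k).le
      linarith
  have hdown : ∀ k, k ≤ j → t ^ k / M k ≤ t ^ j / M j := by
    intro k hk
    induction hk using Nat.decreasingInduction with
    | self => exact le_rfl
    | of_succ k hk ih =>
      refine le_trans ?_ ih
      have h1 : M (k + 1) / M k ≤ t := hmono hk.le
      rw [div_le_iff₀ (hp k)] at h1
      rw [div_le_div_iff₀ (hp _) (hp _), pow_succ]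
      have := mul_le_mul_of_nonneg_left h1 (pow_pos ht k).le
      linarith
  refine ⟨t, ht, ?_⟩
  have h1 : omegaM M t ≤ Real.log (t ^ j / M j) := by
    rw [omegaM, if_neg ht.ne']
    apply ciSup_le
    intro k
    apply Real.log_le_log (div_pos (pow_pos ht k) (hp k))
    rcases le_total j k with h | h
    · exact hup k h
    · exact hdown k h
  have h2 : Real.exp (omegaM M t) ≤ t ^ j / M j :=
    (Real.le_log_iff_exp_le (div_pos (pow_pos ht j) (hp j))).1 h1
  rw [vM, Real.exp_neg, ← div_eq_mul_inv, le_div_iff₀ (Real.exp_pos _)]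
  rw [le_div_iff₀ (hp j)] at h2
  linarith

lemma aux_12 (M N : ℕ → ℝ) (hM : WeightSeq M) (hN : WeightSeq N) (A : ℝ) (hA : 1 ≤ A)
    (h : ∀ j : ℕ, N j ≤ A * M j) (t : ℝ) (ht : 0 ≤ t) : vM N t ≤ A * vM M t := by
  rcases ht.eq_or_lt with h0 | h0
  · subst h0
    simpa [vM, omegaM] using hA
  · have hA0 : 0 < A := by linarith
    have h1 : omegaM M t ≤ Real.log A + omegaM N t := by
      conv_lhs => rw [omegaM, if_neg h0.ne']
      apply ciSup_le
      intro k
      have hMk := hM.1 k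
      have hNk := hN.1 k
      rw [Real.log_le_iff_le_exp (by positivity), Real.exp_add, Real.exp_log hA0]
      have h2 := aux_upper N hN t ht k
      rw [vM, Real.exp_neg, ← div_eq_mul_inv, div_le_iff₀ (Real.exp_pos _)] at h2
      rw [div_le_iff₀ hMk]
      have h3 := mul_le_mul_of_nonneg_right (h k) (Real.exp_pos (omegaM N t)).le
      linarith
    have h2 : vM N t = Real.exp (-omegaM N t) := rfl
    have h3 : A * vM M t = Real.exp (Real.log A + -omegaM M t) := by
      rw [Real.exp_add, Real.exp_log hA0, vM]
    rw [h2, h3]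
    apply Real.exp_le_exp.2
    linarith

lemma aux_vpos (M : ℕ → ℝ) (t : ℝ) : 0 < vM M t := Real.exp_pos _

lemma aux_21 (M N : ℕ → ℝ) (hM : WeightSeq M) (hN : WeightSeq N) (hNlc : LogConvexSeq N)
    (C : ℝ) (hC : 1 ≤ C) (h : ∀ t : ℝ, 0 ≤ t → vM N t ≤ C * vM M t) (j : ℕ) :
    N j ≤ C * M j := by
  obtain ⟨t, ht, h1⟩ := aux_exists N hN hNlc j
  have h2 := aux_upper M hM t ht.le j
  have h3 := mul_le_mul_of_nonneg_left (h t ht.le) (pow_pos ht j).le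
  have h4 := mul_le_mul_of_nonneg_left h2 (by linarith : (0:ℝ) ≤ C)
  nlinarith

lemma aux_23 (M N : ℕ → ℝ) (C : ℝ) (hC : 1 ≤ C)
    (h : ∀ t : ℝ, 0 ≤ t → vM N t ≤ C * vM M t) : Hinf (vM M) ⊆ Hinf (vM N) := by
  rintro f ⟨hf, K, hK⟩
  refine ⟨hf, C * K, fun z => ?_⟩
  have h1 := mul_le_mul_of_nonneg_left (h ‖z‖ (norm_nonneg z)) (norm_nonneg (f z))
  have h2 := mul_le_mul_of_nonneg_left (hK z) (by linarith : (0:ℝ) ≤ C)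
  nlinarith

lemma aux_31 (M N : ℕ → ℝ) (hM : WeightSeq M) (hN : WeightSeq N) (hNlc : LogConvexSeq N)
    (h : Hinf (vM M) ⊆ Hinf (vM N)) : ∃ A : ℝ, 1 ≤ A ∧ ∀ j : ℕ, N j ≤ A * M j := by
  by_contra! hcon
  have hp := hM.1
  have hch : ∀ k : ℕ, ∃ j, (4:ℝ) ^ k * M j < N j := fun k => hcon _ (one_le_pow₀ (by norm_num))
  choose J hJ using hch
  let g : ℕ → ℂ → ℂ := fun k z => (((1/2:ℝ) ^ k / M (J k) : ℝ) : ℂ) * z ^ J k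
  have hgn : ∀ k z, ‖g k z‖ = (1/2:ℝ) ^ k * (‖z‖ ^ J k / M (J k)) := by
    intro k z
    have : (0:ℝ) ≤ (1/2:ℝ) ^ k / M (J k) := div_nonneg (by positivity) (hp _).le
    simp only [g]
    rw [norm_mul, norm_pow, Complex.norm_real, Real.norm_of_nonneg this]
    ring
  have hb : ∀ (R : ℝ), 0 ≤ R → ∀ k z, ‖z‖ ≤ R → ‖g k z‖ ≤ (1/2:ℝ) ^ k * (vM M R)⁻¹ := by
    intro R hR k z hz
    rw [hgn]
    apply mul_le_mul_of_nonneg_left _ (by positivity)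
    have h1 := aux_upper M hM R hR (J k)
    rw [div_le_iff₀ (hp _), inv_mul_eq_div, le_div_iff₀ (aux_vpos M R)]
    refine le_trans ?_ h1
    exact mul_le_mul_of_nonneg_right (pow_le_pow_left₀ (norm_nonneg _) hz _) (aux_vpos M R).le
  have hs : ∀ R : ℝ, Summable fun k : ℕ => (1/2:ℝ) ^ k * (vM M R)⁻¹ := fun R =>
    summable_geometric_two.mul_right _
  let f : ℂ → ℂ := fun z => ∑' k, g k z
  have hfd : Differentiable ℂ f := by
    intro z
    have h1 : DifferentiableOn ℂ (fun w => ∑' k, g k w) (Metric.ball 0 (‖z‖ + 1)) := by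
      apply Complex.differentiableOn_tsum_of_summable_norm (hs (‖z‖ + 1))
      · intro k
        apply Differentiable.differentiableOn
        simp only [g]
        fun_prop
      · exact Metric.isOpen_ball
      · intro k w hw
        exact hb _ (by positivity) k w (by simpa using (mem_ball_zero_iff.1 hw).le)
    exact h1.differentiableAt (Metric.isOpen_ball.mem_nhds (by simp))
  have hfM : f ∈ Hinf (vM M) := by
    refine ⟨hfd, 2, fun z => ?_⟩
    have h1 : ‖f z‖ ≤ 2 * (vM M ‖z‖)⁻¹ := by
      apply tsum_of_norm_bounded (hasSum_geometric_two.mul_right _)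
      intro k
      exact hb ‖z‖ (norm_nonneg z) k z le_rfl
    rwa [← div_eq_mul_inv, le_div_iff₀ (aux_vpos M _)] at h1
  obtain ⟨-, C, hC⟩ := h hfM
  have hk : ∀ k : ℕ, (2:ℝ) ^ k ≤ C := by
    intro k
    obtain ⟨t, ht, h1⟩ := aux_exists N hN hNlc (J k)
    have h2 := hC (t : ℂ)
    have hnt : ‖(t : ℂ)‖ = t := by rw [Complex.norm_real, Real.norm_of_nonneg ht.le]
    rw [hnt] at h2
    let r : ℕ → ℝ := fun k => (1/2:ℝ) ^ k * (t ^ J k / M (J k))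
    have hr0 : ∀ k, 0 ≤ r k := fun k =>
      mul_nonneg (by positivity) (div_nonneg (pow_nonneg ht.le _) (hp _).le)
    have hrs : Summable r := by
      refine Summable.of_nonneg_of_le hr0 (fun k => ?_) (hs t)
      have := hb t ht.le k t hnt.le
      rw [hgn, hnt] at this
      exact this
    have hft : f t = ((∑' k, r k : ℝ) : ℂ) := by
      rw [Complex.ofReal_tsum]
      apply tsum_congr
      intro k
      simp only [g, r]
      push_cast
      ring
    have h3 : r k ≤ ‖f t‖ := by
      rw [hft, Complex.norm_real, Real.norm_of_nonneg (tsum_nonneg hr0)]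
      exact hrs.le_tsum k (fun i _ => hr0 i)
    have h4 : r k * vM N t ≤ C :=
      le_trans (mul_le_mul_of_nonneg_right h3 (aux_vpos N t).le) h2
    refine le_trans ?_ h4
    have h5 : r k * vM N t = (1/2:ℝ) ^ k * ((t ^ J k * vM N t) / M (J k)) := by
      simp only [r]
      ring
    rw [h5]
    have h6 : (4:ℝ) ^ k ≤ (t ^ J k * vM N t) / M (J k) := by
      rw [le_div_iff₀ (hp _)]
      exact (hJ k).le.trans h1
    calc (2:ℝ) ^ k = (1/2:ℝ) ^ k * 4 ^ k := by
          rw [← mul_pow]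
          norm_num
      _ ≤ _ := mul_le_mul_of_nonneg_left h6 (by positivity)
  obtain ⟨n, hn⟩ := pow_unbounded_of_one_lt C (by norm_num : (1:ℝ) < 2)
  exact absurd (hk n) (not_le.2 hn)

/-- Theorem: for log-convex weight sequences `M`, `N` the conditions
`N_j ≤ A·M_j`, `v_M ≼ v_N` and `H^∞_{v_M}(ℂ) ⊆ H^∞_{v_N}(ℂ)` are equivalent;
consequently equality of the spaces is equivalent to
`C⁻¹·N_j ≤ M_j ≤ C·N_j`. -/
theorem stmt6 (M N : ℕ → ℝ) (hM : WeightSeq M) (hMlc : LogConvexSeq M)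
    (hN : WeightSeq N) (hNlc : LogConvexSeq N) :
    ((∃ A : ℝ, 1 ≤ A ∧ ∀ j : ℕ, N j ≤ A * M j) ↔
      (∃ C : ℝ, 1 ≤ C ∧ ∀ t : ℝ, 0 ≤ t → vM N t ≤ C * vM M t)) ∧
    ((∃ A : ℝ, 1 ≤ A ∧ ∀ j : ℕ, N j ≤ A * M j) ↔
      Hinf (vM M) ⊆ Hinf (vM N)) ∧
    (Hinf (vM M) = Hinf (vM N) ↔
      ∃ C : ℝ, 1 ≤ C ∧ ∀ j : ℕ, C⁻¹ * N j ≤ M j ∧ M j ≤ C * N j) := by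
  have key : ∀ M N : ℕ → ℝ, WeightSeq M → WeightSeq N → LogConvexSeq N →
      ((∃ A : ℝ, 1 ≤ A ∧ ∀ j : ℕ, N j ≤ A * M j) ↔ Hinf (vM M) ⊆ Hinf (vM N)) := by
    intro M N hM hN hNlc
    constructor
    · rintro ⟨A, hA, h⟩
      exact aux_23 M N A hA (aux_12 M N hM hN A hA h)
    · exact aux_31 M N hM hN hNlc
  refine ⟨⟨?_, ?_⟩, key M N hM hN hNlc, ?_⟩
  · rintro ⟨A, hA, h⟩
    exact ⟨A, hA, aux_12 M N hM hN A hA h⟩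
  · rintro ⟨C, hC, h⟩
    exact ⟨C, hC, aux_21 M N hM hN hNlc C hC h⟩
  · constructor
    · intro he
      obtain ⟨A, hA, h1⟩ := (key M N hM hN hNlc).2 he.subset
      obtain ⟨B, hB, h2⟩ := (key N M hN hM hMlc).2 he.symm.subset
      refine ⟨max A B, le_max_of_le_left hA, fun j => ⟨?_, ?_⟩⟩
      · rw [inv_mul_le_iff₀ (by positivity)]
        exact (h1 j).trans (mul_le_mul_of_nonneg_right (le_max_left _ _) (hM.1 j).le)
      · exact (h2 j).trans (mul_le_mul_of_nonneg_right (le_max_right _ _) (hN.1 j).le)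
    · rintro ⟨C, hC, h⟩
      apply Set.Subset.antisymm
      · refine (key M N hM hN hNlc).1 ⟨C, hC, fun j => ?_⟩
        have := (h j).1
        rwa [inv_mul_le_iff₀ (by linarith)] at this
      · exact (key N M hN hM hMlc).1 ⟨C, hC, fun j => (h j).2⟩
end

section
/- Let M, N ∈ LC. Then the following are equivalent: (i) there exist c ∈ ℕ, c ≥ 1, and A ≥ 1 such that N_j ≤ A·(M_{c·j})^{1/c} for all j ∈ ℕ; (ii) there exist c ≥ 1 and C ≥ 1 with v_N(t)^c ≤ C·v_M(t) for all t ≥ 0 (equivalently, ω_M(t) = O(ω_N(t)) as t → ∞); (iii) ⋃_{n∈ℕ, n≥1} H^∞_{v_M^n}(ℂ) ⊆ ⋃_{n∈ℕ, n≥1} H^∞_{v_N^n}(ℂ); (iv) ⋂_{c>0} H^∞_{v_M^c}(ℂ) ⊆ ⋂_{c>0} H^∞_{v_N^c}(ℂ). -/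
open Filter Set

lemma LC_mono {M : ℕ → ℝ} (h : LCset M) : ∀ j, M j ≤ M (j+1) := by
  obtain ⟨⟨hp, h0, _⟩, hl, h1⟩ := h
  intro j
  induction j with
  | zero => simpa [h0] using h1
  | succ k ih =>
    have := hl (k+1) (by omega)
    simp only [Nat.add_sub_cancel] at this
    have h2 := hp (k+1)
    have h3 := hp (k+2)
    have h4 : M (k+1) * M (k+1) ≤ M (k+1) * M (k+1+1) := by
      have := mul_le_mul_of_nonneg_right ih h3.le
      have e : M (k+1+1) = M (k+2) := rfl
      rw [e] at *
      nlinarith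
    exact le_of_mul_le_mul_left h4 h2

lemma LC_monotone {M : ℕ → ℝ} (h : LCset M) : Monotone M := monotone_nat_of_le_succ (LC_mono h)

lemma LC_one_le {M : ℕ → ℝ} (h : LCset M) (j : ℕ) : 1 ≤ M j := by
  have := LC_monotone h (Nat.zero_le j)
  rwa [h.1.2.1] at this

lemma LC_pos {M : ℕ → ℝ} (h : LCset M) (j : ℕ) : 0 < M j := h.1.1 j

lemma LC_bdd {M : ℕ → ℝ} (h : LCset M) {t : ℝ} (ht : 0 < t) :
    BddAbove (range fun j : ℕ => Real.log (t ^ j / M j)) := by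
  apply Filter.IsBoundedUnder.bddAbove_range
  refine ⟨0, ?_⟩
  rw [Filter.eventually_map]
  filter_upwards [h.1.2.2.eventually_ge_atTop t, eventually_ge_atTop 1] with j hj h1
  have hM := LC_pos h j
  have hj0 : (j:ℝ) ≠ 0 := by positivity
  have : t ^ j ≤ M j := by
    calc t ^ j ≤ (M j ^ (1 / (j:ℝ))) ^ j := pow_le_pow_left₀ ht.le hj j
      _ = M j := by
        rw [← Real.rpow_natCast, ← Real.rpow_mul hM.le]
        field_simp
        simp
  apply Real.log_nonpos (by positivity)
  rw [div_le_one hM]; exact this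

lemma omega_zero (M : ℕ → ℝ) : omegaM M 0 = 0 := by simp [omegaM]

lemma omega_nonneg {M : ℕ → ℝ} (h : LCset M) {t : ℝ} (ht : 0 ≤ t) : 0 ≤ omegaM M t := by
  rcases ht.eq_or_lt with rfl | ht
  · rw [omega_zero]
  · rw [omegaM, if_neg ht.ne']
    have := le_ciSup (LC_bdd h ht) 0
    simpa [h.1.2.1] using this

lemma le_exp_omega {M : ℕ → ℝ} (h : LCset M) {t : ℝ} (ht : 0 ≤ t) (j : ℕ) :
    t ^ j / M j ≤ Real.exp (omegaM M t) := by
  have hM := LC_pos h j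
  rcases ht.eq_or_lt with rfl | ht
  · rw [omega_zero, Real.exp_zero, div_le_one hM]
    exact (pow_le_one₀ le_rfl zero_le_one).trans (LC_one_le h j)
  · have := le_ciSup (LC_bdd h ht) j
    rw [omegaM, if_neg ht.ne', ← Real.log_le_iff_le_exp (by positivity)]
    exact this

lemma omega_le {M : ℕ → ℝ} (h : LCset M) {t B : ℝ} (ht : 0 < t)
    (hB : ∀ j, t ^ j / M j ≤ Real.exp B) : omegaM M t ≤ B := by
  rw [omegaM, if_neg ht.ne']
  apply ciSup_le
  intro j
  have hM := LC_pos h j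
  rw [Real.log_le_iff_le_exp (by positivity)]
  exact hB j

lemma omega_le_one {M : ℕ → ℝ} (h : LCset M) {t : ℝ} (ht : 0 ≤ t) (h1 : t ≤ 1) :
    omegaM M t ≤ 0 := by
  rcases ht.eq_or_lt with rfl | ht
  · rw [omega_zero]
  apply omega_le h ht
  intro j
  rw [Real.exp_zero, div_le_one (LC_pos h j)]
  exact (pow_le_one₀ ht.le h1).trans (LC_one_le h j)

lemma exists_lt_omega {M : ℕ → ℝ} (h : LCset M) {t B : ℝ} (ht : 0 < t)
    (hB : B < omegaM M t) : ∃ j, Real.exp B < t ^ j / M j := by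
  by_contra! hc
  exact absurd (omega_le h ht hc) (not_le.2 hB)

/-- The maximal term at `t = N (j+1) / N j`. -/
lemma exp_omega_le {N : ℕ → ℝ} (h : LCset N) (j : ℕ) :
    Real.exp (omegaM N (N (j+1) / N j)) ≤ (N (j+1) / N j) ^ (j+1) / N (j+1) := by
  have hp := LC_pos h
  set t := N (j+1) / N j with htd
  have ht : 0 < t := div_pos (hp _) (hp _)
  have hmono : Monotone fun m => N (m+1) / N m := by
    apply monotone_nat_of_le_succ
    intro m
    have := h.2.1 (m+1) (by omega)
    simp only [Nat.add_sub_cancel] at this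
    rw [div_le_div_iff₀ (hp _) (hp _)]
    nlinarith
  have up : ∀ m, j + 1 ≤ m → t ^ m / N m ≤ t ^ (j+1) / N (j+1) := by
    intro m hm
    induction m, hm using Nat.le_induction with
    | base => exact le_rfl
    | succ m hm ih =>
      refine le_trans ?_ ih
      have := hmono (show j ≤ m by omega)
      simp only [← htd] at this
      rw [le_div_iff₀ (hp _)] at this
      rw [div_le_div_iff₀ (hp _) (hp _), pow_succ]
      have h3 : 0 < t ^ m := by positivity
      nlinarith
  have down : ∀ r m, m + r = j + 1 → t ^ m / N m ≤ t ^ (j+1) / N (j+1) := by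
    intro r
    induction r with
    | zero => intro m hm; simp at hm; rw [hm]
    | succ r ih =>
      intro m hm
      refine le_trans ?_ (ih (m+1) (by omega))
      have := hmono (show m ≤ j by omega)
      simp only [← htd] at this
      rw [div_le_iff₀ (hp _)] at this
      rw [div_le_div_iff₀ (hp _) (hp _), pow_succ]
      have h3 : 0 < t ^ m := by positivity
      nlinarith
  have hq : 0 < t ^ (j+1) / N (j+1) := div_pos (by positivity) (hp _)
  rw [← Real.le_log_iff_exp_le hq]
  apply omega_le h ht
  intro m
  rw [Real.exp_log hq]
  rcases le_total (j+1) m with hm | hm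
  · exact up m hm
  · exact down (j+1-m) m (by omega)

def PP (M N : ℕ → ℝ) : Prop :=
  ∃ c : ℕ, 1 ≤ c ∧ ∃ K : ℝ, 0 ≤ K ∧ ∀ t : ℝ, 0 ≤ t → omegaM M t ≤ c * omegaM N t + K

lemma i_to_P {M N : ℕ → ℝ} (hM : LCset M) (hN : LCset N)
    (h : ∃ c : ℕ, 1 ≤ c ∧ ∃ A : ℝ, 1 ≤ A ∧
        ∀ j : ℕ, N j ≤ A * (M (c * j)) ^ (1 / (c : ℝ))) : PP M N := by
  obtain ⟨c, hc, A, hA, h⟩ := h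
  have hN1 := LC_one_le hN 1
  refine ⟨2 * c, by omega, c * Real.log (A * N 1), ?_, ?_⟩
  · exact mul_nonneg (by positivity) (Real.log_nonneg (by nlinarith))
  intro t ht
  have hω := omega_nonneg hN ht
  have hK : 0 ≤ c * Real.log (A * N 1) :=
    mul_nonneg (by positivity) (Real.log_nonneg (by nlinarith))
  rcases le_total t 1 with h1 | h1
  · exact (omega_le_one hM ht h1).trans (by positivity)
  apply omega_le hM (by linarith)
  intro k
  set E := Real.exp (omegaM N t) with hE
  have hE0 : 0 < E := Real.exp_pos _
  have hexp : Real.exp (((2 * c : ℕ) : ℝ) * omegaM N t + c * Real.log (A * N 1))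
      = (A * E) ^ c * (N 1 * E) ^ c := by
    rw [Real.exp_add, Real.exp_nat_mul, Real.exp_nat_mul, Real.exp_log (by positivity), ← hE]
    ring
  rw [hexp]
  set j := k / c
  have hk : c * j + k % c = k := Nat.div_add_mod k c
  have hr : k % c ≤ c := (Nat.mod_lt k hc).le
  have hMj := LC_pos hM (c * j)
  have hMk := LC_pos hM k
  have e1 : t ^ k ≤ t ^ (c * j) * t ^ c := by
    rw [← pow_add]; exact pow_le_pow_right₀ h1 (by omega)
  have e2 : M (c * j) ≤ M k := LC_monotone hM (by omega)
  have e3 : t ≤ N 1 * E := by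
    have := le_exp_omega hN ht 1
    rw [div_le_iff₀ (by linarith), pow_one] at this
    linarith
  have e4 : N j ^ c ≤ A ^ c * M (c * j) := by
    calc N j ^ c ≤ (A * (M (c * j)) ^ (1 / (c : ℝ))) ^ c :=
          pow_le_pow_left₀ (LC_pos hN j).le (h j) c
      _ = _ := by
        rw [mul_pow, ← Real.rpow_natCast (M (c*j) ^ _), ← Real.rpow_mul hMj.le]
        have : (c:ℝ) ≠ 0 := by positivity
        field_simp
        simp
  have e5 : t ^ (c * j) ≤ (E * N j) ^ c := by
    rw [mul_comm c j, pow_mul]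
    have := le_exp_omega hN ht j
    rw [div_le_iff₀ (LC_pos hN j)] at this
    exact pow_le_pow_left₀ (by positivity) this c
  rw [div_le_iff₀ hMk]
  have hN1p : 0 < N 1 := by linarith
  calc t ^ k ≤ t ^ (c * j) * t ^ c := e1
    _ ≤ (E * N j) ^ c * (N 1 * E) ^ c := by
      have := LC_pos hN j
      gcongr
    _ = E ^ c * N j ^ c * (N 1 * E) ^ c := by ring
    _ ≤ E ^ c * (A ^ c * M k) * (N 1 * E) ^ c := by
      gcongr
      exact e4.trans (by gcongr)
    _ = _ := by ring

lemma P_to_i {M N : ℕ → ℝ} (hM : LCset M) (hN : LCset N) (h : PP M N) :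
    ∃ c : ℕ, 1 ≤ c ∧ ∃ A : ℝ, 1 ≤ A ∧
        ∀ j : ℕ, N j ≤ A * (M (c * j)) ^ (1 / (c : ℝ)) := by
  obtain ⟨c, hc, K, hK, h⟩ := h
  refine ⟨c, hc, Real.exp K, Real.one_le_exp hK, ?_⟩
  intro j
  have hc0 : (c:ℝ) ≠ 0 := by positivity
  rcases j with _ | j
  · simp [hN.1.2.1, hM.1.2.1, hK]
  have hNp := LC_pos hN
  set t := N (j+1) / N j with htd
  have ht : 0 < t := div_pos (hNp _) (hNp _)
  have h1 := exp_omega_le hN j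
  rw [← htd] at h1
  have h2 := h t ht.le
  have h3 := le_exp_omega hM ht.le (c * (j+1))
  have hMp := LC_pos hM (c * (j+1))
  rw [div_le_iff₀ hMp] at h3
  rw [le_div_iff₀ (hNp _)] at h1
  have h4 : Real.exp (omegaM M t) ≤ Real.exp (omegaM N t) ^ c * Real.exp K := by
    rw [← Real.exp_nat_mul, ← Real.exp_add]; exact Real.exp_le_exp.2 h2
  set E := Real.exp (omegaM N t)
  have hE : 0 < E := Real.exp_pos _
  have h5 : (E * N (j+1)) ^ c ≤ E ^ c * (Real.exp K * M (c * (j+1))) := by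
    calc (E * N (j+1)) ^ c ≤ (t ^ (j+1)) ^ c :=
          pow_le_pow_left₀ (mul_pos hE (hNp _)).le h1 c
      _ = t ^ (c * (j+1)) := by rw [← pow_mul, mul_comm]
      _ ≤ _ := h3
      _ ≤ E ^ c * Real.exp K * M (c * (j+1)) := by gcongr
      _ = _ := by ring
  rw [mul_pow] at h5
  have h6 := le_of_mul_le_mul_left h5 (by positivity)
  have h7 : N (j+1) ^ c ≤ (Real.exp K * (M (c * (j+1))) ^ (1 / (c : ℝ))) ^ c := by
    rw [mul_pow, ← Real.rpow_natCast (M (c*(j+1)) ^ _), ← Real.rpow_mul hMp.le]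
    rw [one_div_mul_cancel hc0, Real.rpow_one]
    refine h6.trans ?_
    gcongr
    exact le_self_pow₀ (Real.one_le_exp hK) (by omega)
  exact le_of_pow_le_pow_left₀ (by omega) (by positivity) h7

lemma ii_iff_P {M N : ℕ → ℝ} (hN : LCset N) :
    (∃ c : ℝ, 1 ≤ c ∧ ∃ C : ℝ, 1 ≤ C ∧
        ∀ t : ℝ, 0 ≤ t → (vM N t) ^ c ≤ C * vM M t) ↔ PP M N := by
  have key : ∀ c K t : ℝ, (vM N t) ^ c ≤ Real.exp K * vM M t ↔ omegaM M t ≤ c * omegaM N t + K := by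
    intro c K t
    rw [vM, vM, ← Real.exp_mul, ← Real.exp_add, Real.exp_le_exp]
    constructor <;> intro h <;> linarith
  constructor
  · rintro ⟨c, hc, C, hC, h⟩
    obtain ⟨n, hn⟩ := exists_nat_ge c
    refine ⟨n, ?_, Real.log C, Real.log_nonneg hC, ?_⟩
    · have : (1:ℝ) ≤ n := hc.trans hn
      exact_mod_cast this
    · intro t ht
      have h1 := h t ht
      rw [← Real.exp_log (show 0 < C by linarith), key] at h1
      have := mul_le_mul_of_nonneg_right hn (omega_nonneg hN ht)
      linarith
  · rintro ⟨c, hc, K, hK, h⟩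
    refine ⟨c, by exact_mod_cast hc, Real.exp K, Real.one_le_exp hK, ?_⟩
    intro t ht
    rw [key]; exact h t ht

lemma Hinf_sub {M N : ℕ → ℝ} {c : ℕ} {K : ℝ}
    (h : ∀ t : ℝ, 0 ≤ t → omegaM M t ≤ c * omegaM N t + K) {a b : ℝ} (ha : 0 ≤ a)
    (hab : a * c = b) {f : ℂ → ℂ} (hf : f ∈ Hinf (vMpow M a)) : f ∈ Hinf (vMpow N b) := by
  obtain ⟨hd, C, hC⟩ := hf
  refine ⟨hd, C * Real.exp (a * K), ?_⟩
  intro z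
  have h1 := hC z
  have h2 : vMpow N b ‖z‖ ≤ vMpow M a ‖z‖ * Real.exp (a * K) := by
    rw [vMpow, vMpow, ← Real.exp_add, Real.exp_le_exp]
    have := mul_le_mul_of_nonneg_left (h ‖z‖ (norm_nonneg z)) ha
    rw [← hab]; linarith
  calc ‖f z‖ * vMpow N b ‖z‖ ≤ ‖f z‖ * (vMpow M a ‖z‖ * Real.exp (a * K)) := by gcongr
    _ = ‖f z‖ * vMpow M a ‖z‖ * Real.exp (a * K) := by ring
    _ ≤ _ := by gcongr

lemma mono_bound {M : ℕ → ℝ} (hM : LCset M) {c : ℝ} (hc : 0 < c) (i : ℕ) :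
    ∃ D : ℝ, 0 ≤ D ∧ ∀ t : ℝ, 0 ≤ t → t ^ i ≤ D * Real.exp (c * omegaM M t) := by
  obtain ⟨q, hq⟩ := exists_nat_one_div_lt hc
  refine ⟨M (i * (q+1)), (LC_pos hM _).le, ?_⟩
  intro t ht
  have hω := omega_nonneg hM ht
  have h1 := le_exp_omega hM ht (i * (q+1))
  rw [div_le_iff₀ (LC_pos hM _)] at h1
  have hq' : (1:ℝ) ≤ c * ((q+1 : ℕ):ℝ) := by
    rw [div_lt_iff₀ (by positivity)] at hq
    push_cast; linarith
  have h0 := LC_one_le hM (i * (q+1))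
  apply le_of_pow_le_pow_left₀ (n := q+1) (by omega) (by positivity)
  rw [← pow_mul, mul_pow, ← Real.exp_nat_mul]
  refine h1.trans ?_
  rw [mul_comm]
  gcongr
  · exact le_self_pow₀ h0 (by omega)
  · nlinarith

lemma counterex {M N : ℕ → ℝ} (hM : LCset M) (hN : LCset N) (h : ¬ PP M N) :
    ∃ f : ℂ → ℂ, (∀ c : ℝ, 0 < c → f ∈ Hinf (vMpow M c)) ∧
      ∀ n : ℕ, f ∉ Hinf (vMpow N n) := by
  have hN1 := LC_one_le hN 1
  -- choice of the points and monomials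
  have step : ∀ k : ℕ, ∃ t : ℝ, ∃ i : ℕ, ∃ L : ℝ, 1 ≤ t ∧ 1 ≤ L ∧
      (∀ s : ℝ, 0 ≤ s → s ^ i / L ≤ Real.exp (omegaM M s / ((k+1:ℕ):ℝ))) ∧
      Real.exp (((k+1 : ℕ):ℝ) * omegaM N t + 3 * ((k+1:ℕ):ℝ)) / N 1 ≤ t ^ i / L := by
    intro k
    have hp0 : 0 < k + 1 := by omega
    generalize k + 1 = p at *
    have hpR : (0:ℝ) < p := by exact_mod_cast hp0
    have : ∃ t : ℝ, 0 ≤ t ∧ ((p * (p+1) : ℕ):ℝ) * omegaM N t + 3 * (p:ℝ)^2 < omegaM M t := by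
      by_contra! hc
      exact h ⟨p * (p+1), Nat.mul_pos hp0 (by omega), 3 * (p:ℝ)^2, by positivity, hc⟩
    obtain ⟨t, ht0, ht⟩ := this
    have hω := omega_nonneg hN ht0
    have ht1 : 1 ≤ t := by
      by_contra! hc
      have := omega_le_one hM ht0 hc.le
      have h3 : 0 ≤ ((p * (p+1) : ℕ):ℝ) * omegaM N t + 3 * (p:ℝ)^2 := by positivity
      linarith
    obtain ⟨j, hj⟩ := exists_lt_omega hM (by linarith) ht
    have hMj := LC_pos hM j
    have hL1 : 1 ≤ M j ^ (1 / (p:ℝ)) := Real.one_le_rpow (LC_one_le hM j) (by positivity)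
    have hLp : (M j ^ (1 / (p:ℝ))) ^ p = M j := by
      rw [← Real.rpow_natCast, ← Real.rpow_mul hMj.le, one_div_mul_cancel hpR.ne', Real.rpow_one]
    refine ⟨t, j / p, M j ^ (1 / (p:ℝ)), ht1, hL1, ?_, ?_⟩
    · intro s hs
      have hωs := omega_nonneg hM hs
      rcases le_total s 1 with h1 | h1
      · have : s ^ (j/p) / M j ^ (1 / (p:ℝ)) ≤ 1 := by
          rw [div_le_one (by linarith)]
          exact (pow_le_one₀ hs h1).trans hL1
        exact this.trans (Real.one_le_exp (by positivity))
      · apply le_of_pow_le_pow_left₀ (n := p) (by omega) (by positivity)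
        rw [div_pow, hLp, ← Real.exp_nat_mul, mul_div_cancel₀ _ hpR.ne', ← pow_mul]
        refine le_trans ?_ (le_exp_omega hM hs j)
        gcongr
        exact Nat.div_mul_le_self j p
    · have e1 : Real.exp ((p+1) * omegaM N t + 3 * p) ≤ t ^ (j/p+1) / M j ^ (1 / (p:ℝ)) := by
        apply le_of_pow_le_pow_left₀ (n := p) (by omega) (by positivity)
        rw [div_pow, hLp, ← Real.exp_nat_mul, ← pow_mul]
        have : t ^ j ≤ t ^ ((j/p+1) * p) := by
          apply pow_le_pow_right₀ ht1
          have := Nat.div_add_mod j p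
          have := Nat.mod_lt j hp0
          nlinarith
        refine le_trans (le_trans (Real.exp_le_exp.2 ?_) hj.le) (by gcongr)
        push_cast
        apply le_of_eq; ring
      have e2 : t ≤ N 1 * Real.exp (omegaM N t) := by
        have := le_exp_omega hN ht0 1
        rw [div_le_iff₀ (by linarith), pow_one] at this
        linarith
      have e3 : Real.exp ((p+1) * omegaM N t + 3 * p)
          = Real.exp (p * omegaM N t + 3 * p) * Real.exp (omegaM N t) := by
        rw [← Real.exp_add]; congr 1; ring
      have e4 : t ^ (j/p+1) / M j ^ (1 / (p:ℝ))
          ≤ t ^ (j/p) / M j ^ (1 / (p:ℝ)) * N 1 * Real.exp (omegaM N t) := by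
        rw [pow_succ, mul_div_right_comm, mul_assoc]
        gcongr
      rw [e3] at e1
      have e5 := le_of_mul_le_mul_right (e1.trans e4) (Real.exp_pos _)
      rw [div_le_iff₀ (by linarith)]
      exact e5
  choose t i L ht hL hup hlow using step
  set a : ℕ → ℂ → ℂ := fun k z => (1/2:ℂ)^k * (z ^ (i k) / (L k : ℂ)) with ha
  have hnorm : ∀ k z, ‖a k z‖ = (1/2:ℝ)^k * (‖z‖ ^ (i k) / L k) := by
    intro k z
    have : 0 ≤ L k := by linarith [hL k]
    simp [ha, abs_of_nonneg this]
  have hgeo : Summable fun k : ℕ => (1/2:ℝ)^k := summable_geometric_two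
  have hb : ∀ k (s : ℝ), 0 ≤ s → s ^ (i k) / L k ≤ Real.exp (omegaM M s) := by
    intro k s hs
    refine (hup k s hs).trans (Real.exp_le_exp.2 ?_)
    apply div_le_self (omega_nonneg hM hs)
    push_cast; linarith [(Nat.cast_nonneg k : (0:ℝ) ≤ k)]
  have hsum : ∀ z, Summable fun k => a k z := by
    intro z
    refine Summable.of_norm_bounded (hgeo.mul_right (Real.exp (omegaM M ‖z‖))) ?_
    intro k
    rw [hnorm]
    gcongr
    exact hb k _ (norm_nonneg z)
  refine ⟨fun z => ∑' k, a k z, ?_, ?_⟩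
  · intro c hc
    refine ⟨?_, ?_⟩
    · intro z
      have hdo : DifferentiableOn ℂ (fun z => ∑' k, a k z) (Metric.ball 0 (‖z‖+1)) := by
        refine Complex.differentiableOn_tsum_of_summable_norm
          (hgeo.mul_right (Real.exp (omegaM M (‖z‖+1)))) ?_ Metric.isOpen_ball ?_
        · intro k
          simp only [ha]
          fun_prop
        · intro k w hw
          rw [hnorm]
          have hw' : ‖w‖ ≤ ‖z‖ + 1 := by simpa using (mem_ball_zero_iff.1 hw).le
          have := hb k (‖z‖+1) (by positivity)
          have hLk : 0 ≤ L k := by linarith [hL k]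
          gcongr
          refine le_trans ?_ this
          gcongr
      exact hdo.differentiableAt (Metric.isOpen_ball.mem_nhds (by simp))
    · obtain ⟨K, hK⟩ := exists_nat_one_div_lt hc
      choose D hD0 hD using fun k => mono_bound hM hc (i k)
      set DD := 1 + ∑ k ∈ Finset.range K, D k with hDD
      have hS0 : 0 ≤ ∑ k ∈ Finset.range K, D k := Finset.sum_nonneg fun k _ => hD0 k
      have hall : ∀ k (s : ℝ), 0 ≤ s → s ^ (i k) / L k ≤ DD * Real.exp (c * omegaM M s) := by
        intro k s hs
        have hω := omega_nonneg hM hs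
        have hEp := Real.exp_pos (c * omegaM M s)
        rcases lt_or_ge k K with hk | hk
        · have h1 : D k ≤ ∑ k ∈ Finset.range K, D k :=
            Finset.single_le_sum (fun k _ => hD0 k) (Finset.mem_range.2 hk)
          have h2 : s ^ (i k) / L k ≤ s ^ (i k) := div_le_self (by positivity) (hL k)
          refine h2.trans ((hD k s hs).trans ?_)
          gcongr
          linarith
        · refine (hup k s hs).trans ?_
          have h3 : omegaM M s / ((k+1:ℕ):ℝ) ≤ c * omegaM M s := by
            rw [div_eq_mul_one_div, mul_comm]
            gcongr
            refine le_trans ?_ hK.le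
            push_cast
            gcongr
          refine (Real.exp_le_exp.2 h3).trans ?_
          nlinarith
      refine ⟨2 * DD, ?_⟩
      intro z
      have hle : ‖∑' k, a k z‖ ≤ 2 * (DD * Real.exp (c * omegaM M ‖z‖)) := by
        refine tsum_of_norm_bounded (hasSum_geometric_two.mul_right _) ?_
        intro k
        rw [hnorm]
        gcongr
        exact hall k _ (norm_nonneg z)
      rw [vMpow, Real.exp_neg, ← div_eq_mul_inv, div_le_iff₀ (Real.exp_pos _)]
      linarith
  · rintro n ⟨-, C, hC⟩
    have hkey : ∀ k : ℕ, n ≤ k → Real.exp (k:ℝ) ≤ C * N 1 := by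
      intro k hk
      have h1 := hC (t k : ℂ)
      have htk := ht k
      have ht0 : 0 ≤ t k := by linarith
      have hω := omega_nonneg hN ht0
      have hn1 : ‖((t k : ℝ) : ℂ)‖ = t k := by simp [abs_of_nonneg ht0]
      have hreal : ∀ m, a m (t k : ℂ) = (((1/2:ℝ)^m * (t k ^ (i m) / L m) : ℝ) : ℂ) := by
        intro m; simp [ha]
      have hsr : Summable fun m => (1/2:ℝ)^m * (t k ^ (i m) / L m) := by
        have := hsum (t k : ℂ)
        simp only [hreal] at this
        exact_mod_cast this
      have hpos : ∀ m, 0 ≤ (1/2:ℝ)^m * (t k ^ (i m) / L m) := by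
        intro m
        have := hL m
        positivity
      have h2 : (1/2:ℝ)^k * (t k ^ (i k) / L k) ≤ ‖∑' m, a m (t k : ℂ)‖ := by
        simp only [hreal]
        rw [← Complex.ofReal_tsum, Complex.norm_real, Real.norm_of_nonneg (tsum_nonneg hpos)]
        exact hsr.le_tsum k (fun m _ => hpos m)
      have h3 := hlow k
      rw [hn1, vMpow, Real.exp_neg, ← div_eq_mul_inv, div_le_iff₀ (Real.exp_pos _)] at h1
      have h4 : Real.exp (-(k:ℝ)) ≤ (1/2:ℝ)^k := by
        have : Real.exp (-(k:ℝ)) = (Real.exp (-1)) ^ k := by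
          rw [← Real.exp_nat_mul]; congr 1; ring
        rw [this]
        gcongr
        rw [Real.exp_neg, one_div]
        gcongr
        have := Real.add_one_le_exp (1:ℝ)
        linarith
      have h5 : Real.exp (-(k:ℝ)) *
          (Real.exp (((k+1 : ℕ):ℝ) * omegaM N (t k) + 3 * ((k+1:ℕ):ℝ)) / N 1)
          ≤ C * Real.exp (n * omegaM N (t k)) := by
        refine le_trans ?_ (h2.trans h1)
        gcongr
      rw [← mul_div_assoc, div_le_iff₀ (by linarith), ← Real.exp_add] at h5
      have h6 : Real.exp (k:ℝ) * Real.exp (n * omegaM N (t k)) ≤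
          C * N 1 * Real.exp (n * omegaM N (t k)) := by
        rw [← Real.exp_add]
        refine le_trans (Real.exp_le_exp.2 ?_) (h5.trans (le_of_eq (by ring)))
        have hnk : (n:ℝ) ≤ k := by exact_mod_cast hk
        push_cast
        have := mul_le_mul_of_nonneg_right hnk hω
        have hk0 : (0:ℝ) ≤ k := Nat.cast_nonneg k
        nlinarith
      exact le_of_mul_le_mul_right h6 (Real.exp_pos _)
    obtain ⟨k0, hk0⟩ := exists_nat_gt (C * N 1)
    have h1 := hkey (max n k0) (le_max_left _ _)
    have h2 : (k0:ℝ) ≤ (max n k0 : ℕ) := by exact_mod_cast le_max_right _ _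
    have h3 := Real.add_one_le_exp ((max n k0 : ℕ):ℝ)
    linarith


/-- Theorem: for `M, N ∈ LC`, the conditions `N_j ≤ A·(M_{cj})^{1/c}`,
`v_M ≼^𝔠 v_N`, inclusion of the exponential-type unions and inclusion of the
exponential-type intersections are all equivalent. -/
theorem stmt11 (M N : ℕ → ℝ) (hM : LCset M) (hN : LCset N) :
    ((∃ c : ℕ, 1 ≤ c ∧ ∃ A : ℝ, 1 ≤ A ∧
        ∀ j : ℕ, N j ≤ A * (M (c * j)) ^ (1 / (c : ℝ))) ↔
      (∃ c : ℝ, 1 ≤ c ∧ ∃ C : ℝ, 1 ≤ C ∧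
        ∀ t : ℝ, 0 ≤ t → (vM N t) ^ c ≤ C * vM M t)) ∧
    ((∃ c : ℕ, 1 ≤ c ∧ ∃ A : ℝ, 1 ≤ A ∧
        ∀ j : ℕ, N j ≤ A * (M (c * j)) ^ (1 / (c : ℝ))) ↔
      (⋃ n : {n : ℕ // 1 ≤ n}, Hinf (vMpow M (n.1 : ℝ))) ⊆
        ⋃ n : {n : ℕ // 1 ≤ n}, Hinf (vMpow N (n.1 : ℝ))) ∧
    ((∃ c : ℕ, 1 ≤ c ∧ ∃ A : ℝ, 1 ≤ A ∧
        ∀ j : ℕ, N j ≤ A * (M (c * j)) ^ (1 / (c : ℝ))) ↔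
      (⋂ c : {c : ℝ // 0 < c}, Hinf (vMpow M c.1)) ⊆
        ⋂ c : {c : ℝ // 0 < c}, Hinf (vMpow N c.1)) := by
  have hiP : (∃ c : ℕ, 1 ≤ c ∧ ∃ A : ℝ, 1 ≤ A ∧
        ∀ j : ℕ, N j ≤ A * (M (c * j)) ^ (1 / (c : ℝ))) ↔ PP M N :=
    ⟨i_to_P hM hN, P_to_i hM hN⟩
  rw [hiP]
  refine ⟨(ii_iff_P hN).symm, ⟨?_, ?_⟩, ⟨?_, ?_⟩⟩
  · rintro ⟨c, hc, K, hK, h⟩ f hf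
    obtain ⟨⟨n, hn⟩, hf⟩ := mem_iUnion.1 hf
    refine mem_iUnion.2 ⟨⟨n * c, Nat.mul_pos hn hc⟩, ?_⟩
    exact Hinf_sub h (Nat.cast_nonneg n) (by push_cast; ring) hf
  · intro hs
    by_contra hP
    obtain ⟨f, hf, hf'⟩ := counterex hM hN hP
    have : f ∈ ⋃ n : {n : ℕ // 1 ≤ n}, Hinf (vMpow M (n.1 : ℝ)) :=
      mem_iUnion.2 ⟨⟨1, le_rfl⟩, hf _ (by simp)⟩
    obtain ⟨⟨n, hn⟩, h⟩ := mem_iUnion.1 (hs this)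
    exact hf' n h
  · rintro ⟨c, hc, K, hK, h⟩ f hf
    refine mem_iInter.2 ?_
    rintro ⟨b, hb⟩
    have hcR : (0:ℝ) < c := by exact_mod_cast hc
    have h1 := mem_iInter.1 hf ⟨b / c, div_pos hb hcR⟩
    exact Hinf_sub h (div_pos hb hcR).le (div_mul_cancel₀ _ hcR.ne') h1
  · intro hs
    by_contra hP
    obtain ⟨f, hf, hf'⟩ := counterex hM hN hP
    have h1 := mem_iInter.1 (hs (mem_iInter.2 fun c => hf c.1 c.2)) ⟨1, one_pos⟩
    exact hf' 1 (by simpa using h1)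
end
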